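/- arXiv:2401.05729 — 2 statements merged into one kernel-verified Lean document; each statement's English description precedes it below -/
import Mathlib

section
/- Let m ≥ 2, let h ∈ GL_m(ℝ) and λ ∈ ℝ∖{0}. For a Schwartz function f on ℝᵐ×ℝ×ℝ define σ'(h)f(ζ,a,b) := f(hζ, λa, b). Write ℝᵐ = ℝ^{m−2}×ℝ×ℝ and define d(f) on ℝ^{m−2}×ℝ×ℝ by d(f)(ζ,u₁,u₂) := ∫_ℝ f(ζ,u₁,x,0,0) e^{2πi u₂ x} dx (restriction of f to ℝᵐ×{(0,0)} followed by partial Fourier transform in the last ℝᵐ-coordinate). Let σ(h) := F₂ ∘ R(h) ∘ F₂⁻¹ act on Schwartz functions on ℝ^{m−2}×ℝ×ℝ, where R(h)φ(ζ,a,x) := φ(h·(ζ,a,x)) views (ζ,a,x) ∈ ℝᵐ. Then d(σ'(h)f) = σ(h)(d(f)). -/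
open MeasureTheory Matrix

noncomputable section

/-- The additive character `e(x) = e^{2πix}`. -/
def e (x : ℝ) : ℂ := Complex.exp (2 * Real.pi * Complex.I * x)

/-- The partial Fourier transform `F₂` in the last variable:
`F₂f(ξ,u₁,u₂) = ∫ f(ξ,u₁,x) e^{2πi u₂ x} dx`. -/
def F2 {n : ℕ} (f : (Fin n → ℝ) × ℝ × ℝ → ℂ) : (Fin n → ℝ) × ℝ × ℝ → ℂ :=
  fun p => ∫ x : ℝ, f (p.1, p.2.1, x) * e (p.2.2 * x)

/-- The inverse partial Fourier transform:
`F₂⁻¹f(ξ,u₁,x) = ∫ f(ξ,u₁,u₂) e^{−2πi u₂ x} du₂`. -/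
def F2inv {n : ℕ} (f : (Fin n → ℝ) × ℝ × ℝ → ℂ) : (Fin n → ℝ) × ℝ × ℝ → ℂ :=
  fun p => ∫ u₂ : ℝ, f (p.1, p.2.1, u₂) * e (-(u₂ * p.2.2))

/-- `σ(g) = F₂ ∘ R(g) ∘ F₂⁻¹`, where `g` acts on `ℝⁿ×ℝ×ℝ` by the map `G`. -/
def sigmaOp {n : ℕ} (G : (Fin n → ℝ) × ℝ × ℝ → (Fin n → ℝ) × ℝ × ℝ)
    (f : (Fin n → ℝ) × ℝ × ℝ → ℂ) : (Fin n → ℝ) × ℝ × ℝ → ℂ :=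
  F2 (fun v => F2inv f (G v))

/-- Embedding `ℝⁿ×ℝ×ℝ ≅ ℝ^{n+2}` (the last two coordinates are appended). -/
def embV (n : ℕ) (p : (Fin n → ℝ) × ℝ × ℝ) : Fin (n+2) → ℝ :=
  Fin.append p.1 ![p.2.1, p.2.2]

/-- The inverse identification `ℝ^{n+2} ≅ ℝⁿ×ℝ×ℝ`. -/
def splitV (n : ℕ) (v : Fin (n+2) → ℝ) : (Fin n → ℝ) × ℝ × ℝ :=
  (fun i => v (Fin.castAdd 2 i), v (Fin.natAdd n 0), v (Fin.natAdd n 1))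

/-- `d(f)(ζ,u₁,u₂) = ∫ f(ζ,u₁,x,0,0) e^{2πi u₂ x} dx` : restriction to `ℝᵐ×{(0,0)}`
followed by the partial Fourier transform in the last `ℝᵐ`-coordinate (`m = n+2`). -/
def dmap (n : ℕ) (f : (Fin (n+2) → ℝ) × ℝ × ℝ → ℂ) : (Fin n → ℝ) × ℝ × ℝ → ℂ :=
  fun p => ∫ x : ℝ, f (embV n (p.1, p.2.1, x), (0:ℝ), (0:ℝ)) * e (p.2.2 * x)

/-!
`d` is restriction to `ℝᵐ × {0}` followed by `F₂`, and the action on `ℝᵐ × ℝ × ℝ` preserves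
`ℝᵐ × {0}`. Restriction therefore turns `σ'(h)` into `R(h)`, and Fourier inversion in the last
coordinate cancels `F₂⁻¹` against `F₂` in `σ(h) (d f) = F₂ (R(h) (F₂⁻¹ (d f)))`.
-/

section Affine

variable {D E F : Type*} [NormedAddCommGroup D] [NormedSpace ℝ D] [FiniteDimensional ℝ D]
  [NormedAddCommGroup E] [NormedSpace ℝ E] [NormedAddCommGroup F] [NormedSpace ℝ F]

lemma hasTemperateGrowth_affineMap (γ : D →ᵃ[ℝ] E) : Function.HasTemperateGrowth γ := by
  rw [AffineMap.decomp]
  exact γ.linear.toContinuousLinearMap.hasTemperateGrowth.add (.const (γ 0))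

lemma exists_antilipschitzWith_affineMap {γ : D →ᵃ[ℝ] E} (hγ : Function.Injective γ) :
    ∃ K, AntilipschitzWith K γ := by
  obtain ⟨K, -, hK⟩ := γ.linear.exists_antilipschitzWith
    (LinearMap.ker_eq_bot.mpr (γ.linear_injective_iff.mpr hγ))
  refine ⟨K, AntilipschitzWith.of_le_mul_dist fun x y ↦ ?_⟩
  have hγ_sub : γ.linear x - γ.linear y = γ x - γ y := by
    rw [← map_sub]
    exact γ.linearMap_vsub x y
  simpa only [dist_eq_norm, hγ_sub] using hK.le_mul_dist x y

/-- The pullback `f ∘ γ` of a Schwartz function along an injective affine map, as a Schwartz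
function; it is applied to the lines parallel to the last coordinate axis and to their images. -/
def schwartzCompAffine (f : SchwartzMap E F) (γ : D →ᵃ[ℝ] E) (hγ : Function.Injective γ) :
    SchwartzMap D F :=
  SchwartzMap.compCLMOfAntilipschitz ℝ (hasTemperateGrowth_affineMap γ)
    (exists_antilipschitzWith_affineMap hγ).choose_spec f

lemma coe_schwartzCompAffine (f : SchwartzMap E F) (γ : D →ᵃ[ℝ] E)
    (hγ : Function.Injective γ) : ⇑(schwartzCompAffine f γ hγ) = f ∘ γ :=
  rfl

end Affine

section PartialFourier

open scoped FourierTransform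

variable {n : ℕ}

lemma e_eq_fourierChar (x : ℝ) : e x = Real.fourierChar x := by
  rw [e, Real.fourierChar_apply]
  push_cast
  ring_nf

lemma F2_eq_fourierInv (φ : (Fin n → ℝ) × ℝ × ℝ → ℂ) (ζ : Fin n → ℝ) (u₁ u₂ : ℝ) :
    F2 φ (ζ, u₁, u₂) = 𝓕⁻ (fun x ↦ φ (ζ, u₁, x)) u₂ := by
  simp only [F2, Real.fourierInv_eq, e_eq_fourierChar, Circle.smul_def, smul_eq_mul, mul_comm,
    Real.inner_apply]

lemma F2inv_eq_fourier (φ : (Fin n → ℝ) × ℝ × ℝ → ℂ) (ζ : Fin n → ℝ) (u₁ x : ℝ) :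
    F2inv φ (ζ, u₁, x) = 𝓕 (fun u₂ ↦ φ (ζ, u₁, u₂)) x := by
  simp only [F2inv, Real.fourier_real_eq, e_eq_fourierChar, Circle.smul_def, smul_eq_mul,
    mul_comm]

lemma F2inv_F2 {φ : (Fin n → ℝ) × ℝ × ℝ → ℂ} {ζ : Fin n → ℝ} {u₁ x : ℝ}
    (hcont : ContinuousAt (fun y ↦ φ (ζ, u₁, y)) x)
    (hint : Integrable fun y ↦ φ (ζ, u₁, y))
    (hint' : Integrable (𝓕 fun y ↦ φ (ζ, u₁, y))) :
    F2inv (F2 φ) (ζ, u₁, x) = φ (ζ, u₁, x) := by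
  simp only [F2inv_eq_fourier, F2_eq_fourierInv]
  exact hint.fourier_fourierInv_eq hint' hcont

end PartialFourier

section Restriction

open scoped FourierTransform

variable {n : ℕ}

lemma dmap_eq_F2 (f : (Fin (n + 2) → ℝ) × ℝ × ℝ → ℂ) :
    dmap n f = F2 fun p ↦ f (embV n p, 0) :=
  rfl

lemma embV_splitV (v : Fin (n + 2) → ℝ) : embV n (splitV n v) = v := by
  ext i
  refine Fin.addCases (fun j ↦ ?_) (fun j ↦ ?_) i
  · simp [embV, splitV]
  · fin_cases j <;> simp [embV, splitV, Fin.append_right]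

lemma splitV_embV (p : (Fin n → ℝ) × ℝ × ℝ) : splitV n (embV n p) = p := by
  simp [embV, splitV, Fin.append_right]

lemma embV_injective : Function.Injective (embV n) :=
  Function.LeftInverse.injective splitV_embV

lemma injective_embV_last (ζ : Fin n → ℝ) (u₁ : ℝ) :
    Function.Injective fun x ↦ embV n (ζ, u₁, x) :=
  embV_injective.comp ((Prod.mk_right_injective ζ).comp (Prod.mk_right_injective u₁))

lemma embV_eq_lineMap (ζ : Fin n → ℝ) (u₁ x : ℝ) :
    embV n (ζ, u₁, x) = AffineMap.lineMap (embV n (ζ, u₁, 0)) (embV n (ζ, u₁, 1)) x := by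
  ext i
  rw [AffineMap.lineMap_apply_module']
  refine Fin.addCases (fun j ↦ ?_) (fun j ↦ ?_) i
  · simp [embV]
  · fin_cases j <;> simp [embV, Fin.append_right]

lemma exists_schwartzMap_eq_slice {E F : Type*} [NormedAddCommGroup E] [NormedSpace ℝ E]
    [NormedAddCommGroup F] [NormedSpace ℝ F] (f : SchwartzMap E F)
    (G : (Fin (n + 2) → ℝ) →ᵃ[ℝ] E) (ζ : Fin n → ℝ) (u₁ : ℝ)
    (hG : Function.Injective fun x ↦ G (embV n (ζ, u₁, x))) :
    ∃ g : SchwartzMap ℝ F, ⇑g = fun x ↦ f (G (embV n (ζ, u₁, x))) := by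
  let γ : ℝ →ᵃ[ℝ] E := G.comp (AffineMap.lineMap (embV n (ζ, u₁, 0)) (embV n (ζ, u₁, 1)))
  have hγ : ⇑γ = fun x ↦ G (embV n (ζ, u₁, x)) :=
    funext fun x ↦ congrArg G (embV_eq_lineMap ζ u₁ x).symm
  refine ⟨schwartzCompAffine f γ (hγ ▸ hG), ?_⟩
  rw [coe_schwartzCompAffine, hγ]
  rfl

lemma F2inv_dmap (f : SchwartzMap ((Fin (n + 2) → ℝ) × ℝ × ℝ) ℂ) (p : (Fin n → ℝ) × ℝ × ℝ) :
    F2inv (dmap n f) p = f (embV n p, 0) := by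
  obtain ⟨ζ, u₁, x⟩ := p
  obtain ⟨g, hg⟩ := exists_schwartzMap_eq_slice f
    (LinearMap.inl ℝ (Fin (n + 2) → ℝ) (ℝ × ℝ)).toAffineMap ζ u₁
    (LinearMap.inl_injective.comp (injective_embV_last ζ u₁))
  simp only [LinearMap.coe_toAffineMap, LinearMap.inl_apply] at hg
  rw [dmap_eq_F2]
  apply F2inv_F2 <;> rw [← hg]
  · exact g.continuous.continuousAt
  · exact g.integrable
  · exact (𝓕 g).integrable

end Restriction

-- Integrability guarantees that the equation is not between junk values of divergent integrals.
theorem stmt6_general (n : ℕ) (G : (Fin (n + 2) → ℝ) →ᵃ[ℝ] (Fin (n + 2) → ℝ))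
    (hG : ∀ ζ u₁, Function.Injective fun x ↦ G (embV n (ζ, u₁, x)))
    (A : ℝ × ℝ → ℝ × ℝ) (hA : A 0 = 0) (f : SchwartzMap ((Fin (n + 2) → ℝ) × ℝ × ℝ) ℂ) :
    (∀ ζ u₁, Integrable fun x ↦ f (G (embV n (ζ, u₁, x)), 0)) ∧
      dmap n (fun q ↦ f (G q.1, A q.2))
        = sigmaOp (fun p ↦ splitV n (G (embV n p))) (dmap n f) := by
  constructor
  · intro ζ u₁
    obtain ⟨g, hg⟩ := exists_schwartzMap_eq_slice f
      ((LinearMap.inl ℝ (Fin (n + 2) → ℝ) (ℝ × ℝ)).toAffineMap.comp G) ζ u₁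
      (LinearMap.inl_injective.comp (hG ζ u₁))
    exact hg ▸ g.integrable
  · calc dmap n (fun q ↦ f (G q.1, A q.2))
        = F2 fun p ↦ f (G (embV n p), 0) := by simp only [dmap_eq_F2, hA]
      _ = F2 fun p ↦ F2inv (dmap n f) (splitV n (G (embV n p))) := by
          simp only [F2inv_dmap, embV_splitV]
      _ = sigmaOp (fun p ↦ splitV n (G (embV n p))) (dmap n f) := rfl

theorem stmt6 (n : ℕ) (h : Matrix (Fin (n+2)) (Fin (n+2)) ℝ) (hh : IsUnit h.det)
    (lam : ℝ) (hlam : lam ≠ 0) (f : SchwartzMap ((Fin (n+2) → ℝ) × ℝ × ℝ) ℂ) :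
    dmap n (fun q => f (h.mulVec q.1, lam * q.2.1, q.2.2))
      = sigmaOp (fun p => splitV n (h.mulVec (embV n p))) (dmap n (⇑f)) := by
  have h_inj : Function.Injective h.mulVec := mulVec_injective_of_det_ne_zero hh.ne_zero
  exact (stmt6_general n h.mulVecLin.toAffineMap
    (fun ζ u₁ ↦ h_inj.comp (injective_embV_last ζ u₁))
    (fun q ↦ (lam * q.1, q.2)) (by simp) f).2
end
end

section
/- Let m, n be positive integers and let D be a nonzero integer. Then ∑_{d ≥ 1, d²∣D, d∣m, d∣n} d · A(4m/d, D/d²) · A(4n/d, D/d²) ≤ σ₁(|D|) · A(4m, D) · A(4n, D), where σ₁(|D|) denotes the sum of the positive divisors of |D|, and the sum on the left runs over positive integers d such that d² divides D, d divides m and d divides n. -/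
/-- `A m n` is the number of residue classes `x` modulo `m` with `x² ≡ n (mod m)`. -/
noncomputable def A (m : ℕ) (n : ℤ) : ℕ := Nat.card {x : ZMod m // x ^ 2 = (n : ZMod m)}

/-!
Multiplication by `d` is a well-defined injection `ℤ/k → ℤ/dk`, and it sends square roots of `n`
to square roots of `d² n`. So `A (m / d) (D / d²) ≤ A m D`: every term of the sum is at most
`d · A M D · A N D`, and the `d` that occur are distinct divisors of `D`.
-/

/-- Multiplication by `d` as a map `ℤ/k → ℤ/dk`, which carries square roots of `n` modulo `k` to
square roots of `d² n` modulo `d k`. -/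
def scaleHom (d k : ℕ) : ZMod k →+ ZMod (d * k) :=
  ZMod.lift k ⟨(AddMonoidHom.mulLeft (d : ZMod (d * k))).comp (Int.castAddHom _), by
    change (d : ZMod (d * k)) * (k : ℤ) = 0
    exact_mod_cast ZMod.natCast_self (d * k)⟩

section scaleHom

variable {d k : ℕ}

lemma scaleHom_intCast (a : ℤ) : scaleHom d k a = d * a :=
  ZMod.lift_coe _ _ _

lemma scaleHom_injective (hd : d ≠ 0) : Function.Injective (scaleHom d k) := by
  refine (ZMod.lift_injective _).2 fun a (ha : (d : ZMod (d * k)) * a = 0) ↦ ?_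
  have hdvd : (d : ℤ) * k ∣ d * a := by
    exact_mod_cast (ZMod.intCast_zmod_eq_zero_iff_dvd (d * a) (d * k)).1 (by exact_mod_cast ha)
  exact (ZMod.intCast_zmod_eq_zero_iff_dvd a k).2
    (Int.dvd_of_mul_dvd_mul_left (by exact_mod_cast hd) hdvd)

lemma scaleHom_sq (x : ZMod k) : scaleHom d k x ^ 2 = d * scaleHom d k (x ^ 2) := by
  obtain ⟨a, rfl⟩ := ZMod.intCast_surjective x
  rw [← Int.cast_pow, scaleHom_intCast, scaleHom_intCast, Int.cast_pow]
  ring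

lemma scaleHom_sq_eq_intCast {x : ZMod k} {n : ℤ} (hx : x ^ 2 = n) :
    scaleHom d k x ^ 2 = ((d ^ 2 * n : ℤ) : ZMod (d * k)) := by
  rw [scaleHom_sq, hx, scaleHom_intCast]
  push_cast
  ring

end scaleHom

lemma finite_sq_eq_intCast (m : ℕ) (n : ℤ) : Finite {x : ZMod m // x ^ 2 = (n : ZMod m)} := by
  cases m with
  | zero =>
    change Finite {x : ℤ // x ^ 2 = n}
    exact Finite.of_injective (fun x ↦ (⟨x, (Polynomial.mem_nthRoots two_pos).2 x.2⟩ :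
      {x // x ∈ Polynomial.nthRoots 2 n})) fun x y h ↦ Subtype.ext (congrArg (·.1) h)
  | succ m => infer_instance

lemma A_le_A_mul {d : ℕ} (hd : d ≠ 0) (k : ℕ) (n : ℤ) : A k n ≤ A (d * k) (d ^ 2 * n) :=
  haveI := finite_sq_eq_intCast (d * k) (d ^ 2 * n)
  Nat.card_le_card_of_injective
    (Subtype.map (scaleHom d k) fun _ hx ↦ scaleHom_sq_eq_intCast hx)
    (Subtype.map_injective _ (scaleHom_injective hd))

lemma A_div_le {d m : ℕ} {D : ℤ} (hd : d ≠ 0) (hdm : d ∣ m) (hdD : (d : ℤ) ^ 2 ∣ D) :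
    A (m / d) (D / (d : ℤ) ^ 2) ≤ A m D := by
  have h := A_le_A_mul hd (m / d) (D / (d : ℤ) ^ 2)
  rwa [Nat.mul_div_cancel' hdm, Int.mul_ediv_cancel' hdD] at h

theorem stmt10_general {M N : ℕ} {D : ℤ} (hD : D ≠ 0) {s : Finset ℕ}
    (hs : ∀ d ∈ s, d ∣ M ∧ d ∣ N ∧ (d : ℤ) ^ 2 ∣ D) :
    ∑ d ∈ s, d * A (M / d) (D / (d : ℤ) ^ 2) * A (N / d) (D / (d : ℤ) ^ 2)
      ≤ (∑ d ∈ D.natAbs.divisors, d) * A M D * A N D := by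
  have mem_divisors : ∀ d ∈ s, d ∈ D.natAbs.divisors := fun d hd ↦
    Nat.mem_divisors.2 ⟨Int.natCast_dvd.1 ((dvd_pow_self _ two_ne_zero).trans (hs d hd).2.2),
      Int.natAbs_ne_zero.2 hD⟩
  calc
    _ ≤ ∑ d ∈ s, d * A M D * A N D := by
      refine Finset.sum_le_sum fun d hd ↦ ?_
      obtain ⟨hdM, hdN, hdD⟩ := hs d hd
      have hd0 : d ≠ 0 := (Nat.pos_of_mem_divisors (mem_divisors d hd)).ne'
      gcongr
      exacts [A_div_le hd0 hdM hdD, A_div_le hd0 hdN hdD]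
    _ = (∑ d ∈ s, d) * A M D * A N D := by rw [Finset.sum_mul, Finset.sum_mul]
    _ ≤ (∑ d ∈ D.natAbs.divisors, d) * A M D * A N D := by
      gcongr
      exact mem_divisors

theorem stmt10 (m n : ℕ) (hm : 0 < m) (hn : 0 < n) (D : ℤ) (hD : D ≠ 0) :
    ∑ d ∈ m.divisors.filter (fun d : ℕ => (d : ℤ) ^ 2 ∣ D ∧ d ∣ n),
        d * A (4 * m / d) (D / (d : ℤ) ^ 2) * A (4 * n / d) (D / (d : ℤ) ^ 2)
      ≤ (∑ d ∈ D.natAbs.divisors, d) * A (4 * m) D * A (4 * n) D := by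
  refine stmt10_general hD fun d hd ↦ ?_
  obtain ⟨hdm, hdD, hdn⟩ := Finset.mem_filter.1 hd
  exact ⟨(Nat.dvd_of_mem_divisors hdm).mul_left 4, hdn.mul_left 4, hdD⟩
end
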